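/- arXiv:1811.02072 — 4 statements merged into one kernel-verified Lean document; each statement's English description precedes it below -/
import Mathlib

section
/- A standard graded Artinian K-algebra A has the Weak Lefschetz Property if and only if the number of parts of its Jordan type J_A equals the Sperner number of A. -/
open Module LinearMap

namespace Paper

variable {K : Type*} [Field K]

/-- The number of Jordan blocks of size `j` of an endomorphism `φ`, expressed through
the ranks of its powers: `#{blocks of size j} = rk φ^{j-1} − 2 rk φ^j + rk φ^{j+1}`
(for `j ≥ 1`). -/
noncomputable def blockCount {V : Type*} [AddCommGroup V] [Module K V]
    (φ : Module.End K V) (j : ℕ) : ℕ :=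
  (finrank K ↥(LinearMap.range (φ ^ (j - 1))) + finrank K ↥(LinearMap.range (φ ^ (j + 1)))) -
    2 * finrank K ↥(LinearMap.range (φ ^ j))

/-- The Jordan type of an endomorphism `φ` of a finite-dimensional space: the partition
(multiset) formed by the sizes of the Jordan blocks of `φ`. -/
noncomputable def jordanType {V : Type*} [AddCommGroup V] [Module K V]
    (φ : Module.End K V) : Multiset ℕ :=
  ∑ j ∈ Finset.Icc 1 (finrank K V), Multiset.replicate (blockCount φ j) j

/-- A property `P` holds for a generic element of a finite-dimensional subspace `W` if,
in coordinates with respect to a fixed basis of `W`, it holds on the nonvanishing locus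
of some nonzero polynomial (a nonempty Zariski-open subset of `W`). -/
def GenericallyOn {A : Type*} [AddCommGroup A] [Module K A]
    (W : Submodule K A) [Module.Finite K ↥W] (P : A → Prop) : Prop :=
  ∃ g : MvPolynomial (Fin (finrank K ↥W)) K, g ≠ 0 ∧
    ∀ c : Fin (finrank K ↥W) → K, MvPolynomial.eval c g ≠ 0 →
      P (∑ i, c i • ((Module.finBasis K ↥W) i : A))

/-- The conjugate (dual) partition of the partition formed by the values `h 0, …, h d`
of a Hilbert function: its `m`-th part is `#{i ≤ d : h i ≥ m}`. -/
noncomputable def conjHilb (h : ℕ → ℕ) (d : ℕ) : Multiset ℕ :=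
  (Finset.Icc 1 ((Finset.range (d + 1)).sup h)).val.map
    fun m => ((Finset.range (d + 1)).filter fun i => m ≤ h i).card

/-- The sum of the `m` largest parts of a partition (multiset of naturals). -/
noncomputable def topSum (P : Multiset ℕ) (m : ℕ) : ℕ :=
  (((P.sort (· ≤ ·)).reverse).take m).sum

end Paper

/-!
For `l` of degree one, multiplication by `l` is nilpotent, so the number of its Jordan blocks is
`dim ker μ_l = dim A - rk μ_l`. Write `h i = dim A_i` and fix a degree `k`. The component
`A_i → A_{i+1}` of `μ_l` has rank at most `h i` if `i < k` and at most `h (i + 1)` if `k ≤ i`; these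
bounds add up to `dim A - h k`. Hence `μ_l` has at least `h k` Jordan blocks, and if there are
exactly `h k` then every component has maximal rank.

Conversely, once `A_i → A_{i+1}` is surjective so are all later components, because `A` is generated
in degree one. So if all components have maximal rank then `h` is unimodal, and for `k` at its peak
the maximal ranks are exactly the bounds above. The nullity of `μ_l` is upper semicontinuous in `l`,
so the minimum `h k` is attained generically as soon as it is attained at all.
-/

namespace Paper

section JordanType

variable {K V : Type*} [Field K] [AddCommGroup V] [Module K V]

lemma finrank_map_add_finrank_ker_inf {V' : Type*} [AddCommGroup V'] [Module K V']
    (f : V →ₗ[K] V') (W : Submodule K V) [FiniteDimensional K W] :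
    finrank K (W.map f) + finrank K ↥(ker f ⊓ W) = finrank K W := by
  have hker : finrank K (ker (f.domRestrict W)) = finrank K ↥(ker f ⊓ W) := by
    rw [ker_domRestrict, ← Submodule.finrank_map_subtype_eq, Submodule.map_comap_subtype, inf_comm]
  rw [← hker, ← range_domRestrict, finrank_range_add_finrank_ker]

variable [FiniteDimensional K V]

lemma finrank_range_pow_succ_add (φ : End K V) (j : ℕ) :
    finrank K (range (φ ^ (j + 1))) + finrank K ↥(ker φ ⊓ range (φ ^ j)) =
      finrank K (range (φ ^ j)) := by
  rw [pow_succ', End.mul_eq_comp, range_comp, finrank_map_add_finrank_ker_inf]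

lemma blockCount_succ_add (φ : End K V) (j : ℕ) :
    blockCount φ (j + 1) + finrank K ↥(ker φ ⊓ range (φ ^ (j + 1))) =
      finrank K ↥(ker φ ⊓ range (φ ^ j)) := by
  have hmono : finrank K ↥(ker φ ⊓ range (φ ^ (j + 1))) ≤ finrank K ↥(ker φ ⊓ range (φ ^ j)) :=
    Submodule.finrank_mono (inf_le_inf_left _ (pow_succ φ j ▸ range_comp_le_range φ (φ ^ j)))
  have hj := finrank_range_pow_succ_add φ j
  have hj' := finrank_range_pow_succ_add φ (j + 1)
  rw [blockCount, Nat.add_sub_cancel]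
  lia

lemma sum_blockCount_add (φ : End K V) (n : ℕ) :
    ∑ j ∈ Finset.Icc 1 n, blockCount φ j + finrank K ↥(ker φ ⊓ range (φ ^ n)) =
      finrank K (ker φ) := by
  induction n with
  | zero =>
    rw [Finset.Icc_eq_empty (by simp), Finset.sum_empty, zero_add, pow_zero, End.one_eq_id,
      range_id, inf_top_eq]
  | succ n ih => rw [Finset.sum_Icc_succ_top (by lia), add_assoc, blockCount_succ_add, ih]

lemma card_jordanType {φ : End K V} (hφ : IsNilpotent φ) :
    Multiset.card (jordanType φ) = finrank K (ker φ) := by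
  obtain ⟨m, hm⟩ := hφ
  have hpow : φ ^ finrank K V = 0 := by
    rw [← ker_eq_top, eq_top_iff, ← ker_eq_top.mpr hm]
    exact End.ker_pow_le_ker_pow_finrank φ m
  have hsum := sum_blockCount_add φ (finrank K V)
  rw [hpow, range_zero, inf_bot_eq, finrank_bot, add_zero] at hsum
  simpa [jordanType, Multiset.card_sum] using hsum

end JordanType

section DegreeOneMaps

variable {K V : Type*} [Field K] [AddCommGroup V] [Module K V]

lemma finrank_iSup_of_iSupIndep {ι : Type*} [Fintype ι] {N : ι → Submodule K V}
    [∀ i, FiniteDimensional K (N i)] (hN : iSupIndep N) :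
    finrank K ↥(⨆ i, N i) = ∑ i, finrank K (N i) := by
  classical
  rw [Submodule.iSup_eq_range_dfinsupp_lsum,
    finrank_range_of_inj hN.dfinsupp_lsum_injective]
  exact finrank_directSum K fun i => N i

lemma finrank_iSup_of_iSupIndep_of_eq_bot {N : ℕ → Submodule K V}
    [∀ i, FiniteDimensional K (N i)] (hN : iSupIndep N) {n : ℕ} (hbot : ∀ i, n ≤ i → N i = ⊥) :
    finrank K ↥(⨆ i, N i) = ∑ i : Fin n, finrank K (N i) := by
  have hsup : ⨆ i, N i = ⨆ i : Fin n, N i := by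
    refine le_antisymm (iSup_le fun i => ?_) (iSup_le fun i => le_iSup N i)
    rcases lt_or_ge i n with hi | hi
    · exact le_iSup (fun j : Fin n => N j) ⟨i, hi⟩
    · exact hbot i hi ▸ bot_le
  rw [hsup]
  exact finrank_iSup_of_iSupIndep (hN.comp Fin.val_injective)

lemma min_le_apply_succAbove {α : Type*} [LinearOrder α] (h : ℕ → α) {d : ℕ} (k : Fin (d + 1))
    (i : Fin d) : min (h i) (h (i + 1)) ≤ h (k.succAbove i) := by
  rcases lt_or_ge i.castSucc k with hi | hi
  · simp [Fin.succAbove_of_castSucc_lt _ _ hi]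
  · simp [Fin.succAbove_of_le_castSucc _ _ hi]

lemma exists_finrank_eq_sup {𝒜 : ℕ → Submodule K V} {d : ℕ}
    (htop : ∀ i, d < i → 𝒜 i = ⊥) :
    ∃ k : Fin (d + 1), ((Finset.range (d + 1)).sup fun i => finrank K (𝒜 i)) = finrank K (𝒜 k) ∧
      ∀ i, finrank K (𝒜 i) ≤ finrank K (𝒜 k) := by
  obtain ⟨k, hk, hsup⟩ := Finset.exists_mem_eq_sup (Finset.range (d + 1))
    Finset.nonempty_range_add_one fun i => finrank K (𝒜 i)
  refine ⟨⟨k, Finset.mem_range.mp hk⟩, hsup, fun i => ?_⟩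
  rcases lt_or_ge d i with hi | hi
  · rw [htop i hi, finrank_bot]
    exact Nat.zero_le _
  · exact hsup ▸ Finset.le_sup (f := fun i => finrank K (𝒜 i)) (Finset.mem_range_succ_iff.mpr hi)

/-- `φ` restricts to maps of maximal rank `𝒜 i → 𝒜 (i + 1)`, for `φ` raising degrees by one. An
algebra has the weak Lefschetz property when this holds for multiplication by some `l ∈ 𝒜 1`. -/
def HasMaximalRank (𝒜 : ℕ → Submodule K V) (φ : End K V) : Prop :=
  ∀ i, finrank K ((𝒜 i).map φ) = min (finrank K (𝒜 i)) (finrank K (𝒜 (i + 1)))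

variable [FiniteDimensional K V] {𝒜 : ℕ → Submodule K V} {φ : End K V} {d : ℕ}

lemma finrank_map_le_min (hφ : ∀ i, (𝒜 i).map φ ≤ 𝒜 (i + 1)) (i : ℕ) :
    finrank K ((𝒜 i).map φ) ≤ min (finrank K (𝒜 i)) (finrank K (𝒜 (i + 1))) :=
  le_min (Submodule.finrank_map_le φ (𝒜 i)) (Submodule.finrank_mono (hφ i))

lemma finrank_range_eq_sum (h𝒜 : DirectSum.IsInternal 𝒜) (htop : ∀ i, d < i → 𝒜 i = ⊥)
    (hφ : ∀ i, (𝒜 i).map φ ≤ 𝒜 (i + 1)) :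
    finrank K (range φ) = ∑ i : Fin d, finrank K ((𝒜 i).map φ) := by
  have hindep : iSupIndep fun i => (𝒜 i).map φ :=
    (h𝒜.submodule_iSupIndep.comp (add_left_injective 1)).mono hφ
  rw [range_eq_map, ← h𝒜.submodule_iSup_eq_top, Submodule.map_iSup]
  refine finrank_iSup_of_iSupIndep_of_eq_bot hindep fun i hi => ?_
  exact eq_bot_iff.mpr (htop (i + 1) (Nat.lt_succ_of_le hi) ▸ hφ i)

lemma finrank_ker_eq_add_sum (h𝒜 : DirectSum.IsInternal 𝒜) (htop : ∀ i, d < i → 𝒜 i = ⊥)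
    (hφ : ∀ i, (𝒜 i).map φ ≤ 𝒜 (i + 1)) (k : Fin (d + 1)) :
    finrank K (ker φ) = finrank K (𝒜 k) +
      ∑ i : Fin d, (finrank K (𝒜 (k.succAbove i)) - finrank K ((𝒜 i).map φ)) := by
  have hbound (i : Fin d) : finrank K ((𝒜 i).map φ) ≤ finrank K (𝒜 (k.succAbove i)) :=
    (finrank_map_le_min hφ i).trans (min_le_apply_succAbove (fun j => finrank K (𝒜 j)) k i)
  have hdim : finrank K V = finrank K (𝒜 k) + ∑ i : Fin d, finrank K (𝒜 (k.succAbove i)) := by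
    rw [← finrank_top, ← h𝒜.submodule_iSup_eq_top,
      finrank_iSup_of_iSupIndep_of_eq_bot h𝒜.submodule_iSupIndep htop,
      Fin.sum_univ_succAbove _ k]
  have hrank := finrank_range_eq_sum h𝒜 htop hφ
  have hnullity := finrank_range_add_finrank_ker φ
  have hsum := Finset.sum_le_sum fun i (_ : i ∈ Finset.univ) => hbound i
  rw [Finset.sum_tsub_distrib _ fun i _ => hbound i]
  lia

lemma finrank_ker_eq_iff (h𝒜 : DirectSum.IsInternal 𝒜) (htop : ∀ i, d < i → 𝒜 i = ⊥)
    (hφ : ∀ i, (𝒜 i).map φ ≤ 𝒜 (i + 1)) (k : Fin (d + 1)) :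
    finrank K (ker φ) = finrank K (𝒜 k) ↔
      ∀ i : Fin d, finrank K (𝒜 (k.succAbove i)) ≤ finrank K ((𝒜 i).map φ) := by
  simp [finrank_ker_eq_add_sum h𝒜 htop hφ k, Nat.sub_eq_zero_iff_le]

lemma hasMaximalRank_of_finrank_ker_eq (h𝒜 : DirectSum.IsInternal 𝒜)
    (htop : ∀ i, d < i → 𝒜 i = ⊥) (hφ : ∀ i, (𝒜 i).map φ ≤ 𝒜 (i + 1)) {k : Fin (d + 1)}
    (hker : finrank K (ker φ) = finrank K (𝒜 k)) : HasMaximalRank 𝒜 φ := by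
  intro i
  refine le_antisymm (finrank_map_le_min hφ i) ?_
  rcases lt_or_ge i d with hi | hi
  · exact (min_le_apply_succAbove (fun j => finrank K (𝒜 j)) k ⟨i, hi⟩).trans
      ((finrank_ker_eq_iff h𝒜 htop hφ k).mp hker ⟨i, hi⟩)
  · rw [htop (i + 1) (Nat.lt_succ_of_le hi), finrank_bot, min_zero]
    exact Nat.zero_le _

end DegreeOneMaps

section Unimodality

lemma apply_succAbove_le_min_of_isMax {α : Type*} [LinearOrder α] {h : ℕ → α}
    (hdesc : ∀ ⦃i j⦄, i ≤ j → h (i + 1) ≤ h i → h (j + 1) ≤ h j) {d : ℕ} {k : Fin (d + 1)}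
    (hmax : ∀ i, h i ≤ h k) (i : Fin d) : h (k.succAbove i) ≤ min (h i) (h (i + 1)) := by
  rcases lt_or_ge i.castSucc k with hik | hki
  · suffices h i ≤ h (i + 1) by simpa [Fin.succAbove_of_castSucc_lt _ _ hik]
    by_contra! hlt
    have hanti : AntitoneOn h (Set.Ici i) :=
      antitoneOn_nat_Ici_of_succ_le fun j hj => hdesc hj hlt.le
    have hle : h k ≤ h (i + 1) := hanti (Nat.le_succ i) (Fin.le_def.mp hik.le) hik
    exact (hle.trans_lt hlt).not_ge (hmax i)
  · suffices h (i + 1) ≤ h i by simpa [Fin.succAbove_of_le_castSucc _ _ hki]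
    exact hdesc hki (hmax (k + 1))

lemma mul_map_mulLeft {R A : Type*} [CommSemiring R] [CommSemiring A] [Algebra R A] (l : A)
    (M N : Submodule R A) : M * N.map (mulLeft R l) = (M * N).map (mulLeft R l) := by
  have hspan (P : Submodule R A) : P.map (mulLeft R l) = Submodule.span R {l} * P :=
    Submodule.span_singleton_mul.symm
  rw [hspan, hspan, mul_left_comm]

lemma map_mulLeft_eq_of_le {R A : Type*} [CommSemiring R] [CommSemiring A] [Algebra R A]
    {𝒜 : ℕ → Submodule R A} (hstd : ∀ i, 𝒜 (i + 1) = 𝒜 1 * 𝒜 i) {l : A} {i j : ℕ} (hij : i ≤ j)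
    (hi : (𝒜 i).map (mulLeft R l) = 𝒜 (i + 1)) : (𝒜 j).map (mulLeft R l) = 𝒜 (j + 1) := by
  induction j, hij using Nat.le_induction with
  | base => exact hi
  | succ j _ ih =>
    calc (𝒜 (j + 1)).map (mulLeft R l) = 𝒜 1 * (𝒜 j).map (mulLeft R l) := by
          rw [hstd j, mul_map_mulLeft]
      _ = 𝒜 (j + 1 + 1) := by rw [ih, ← hstd (j + 1)]

variable {K A : Type*} [Field K] [CommRing A] [Algebra K A] [FiniteDimensional K A]
  {𝒜 : ℕ → Submodule K A} {l : A}

lemma HasMaximalRank.finrank_succ_le_of_le (hmr : HasMaximalRank 𝒜 (mulLeft K l))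
    (hstd : ∀ i, 𝒜 (i + 1) = 𝒜 1 * 𝒜 i) (hl : ∀ i, (𝒜 i).map (mulLeft K l) ≤ 𝒜 (i + 1))
    ⦃i j : ℕ⦄ (hij : i ≤ j) (hi : finrank K (𝒜 (i + 1)) ≤ finrank K (𝒜 i)) :
    finrank K (𝒜 (j + 1)) ≤ finrank K (𝒜 j) := by
  have hsurj : (𝒜 i).map (mulLeft K l) = 𝒜 (i + 1) :=
    Submodule.eq_of_le_of_finrank_eq (hl i) ((hmr i).trans (min_eq_right hi))
  rw [← map_mulLeft_eq_of_le hstd hij hsurj]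
  exact Submodule.finrank_map_le _ _

lemma HasMaximalRank.finrank_ker_mulLeft_eq (hmr : HasMaximalRank 𝒜 (mulLeft K l))
    (h𝒜 : DirectSum.IsInternal 𝒜) (hstd : ∀ i, 𝒜 (i + 1) = 𝒜 1 * 𝒜 i) {d : ℕ}
    (htop : ∀ i, d < i → 𝒜 i = ⊥) (hl : ∀ i, (𝒜 i).map (mulLeft K l) ≤ 𝒜 (i + 1))
    {k : Fin (d + 1)} (hmax : ∀ i, finrank K (𝒜 i) ≤ finrank K (𝒜 k)) :
    finrank K (ker (mulLeft K l)) = finrank K (𝒜 k) := by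
  refine (finrank_ker_eq_iff h𝒜 htop hl k).mpr fun i => ?_
  rw [hmr i]
  exact apply_succAbove_le_min_of_isMax (h := fun j => finrank K (𝒜 j))
    (hmr.finrank_succ_le_of_le hstd hl) hmax i

end Unimodality

section Generic

variable {K A : Type*} [Field K] [AddCommGroup A] [Module K A] {W : Submodule K A}
  [Module.Finite K W]

lemma GenericallyOn.mono {P Q : A → Prop} (hP : GenericallyOn W P)
    (hPQ : ∀ l ∈ W, P l → Q l) : GenericallyOn W Q := by
  obtain ⟨g, hg, hgP⟩ := hP
  exact ⟨g, hg, fun c hc => hPQ _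
    (W.sum_mem fun i _ => W.smul_mem _ (finBasis K W i).property) (hgP c hc)⟩

lemma GenericallyOn.exists_mem [Infinite K] {P : A → Prop} (hP : GenericallyOn W P) :
    ∃ l ∈ W, P l := by
  obtain ⟨g, hg, hgP⟩ := hP.mono fun l hl hPl => And.intro hl hPl
  obtain ⟨c, hc⟩ : ∃ c, MvPolynomial.eval c g ≠ 0 := by
    by_contra! hzero
    exact hg (MvPolynomial.funext fun c => by simpa using hzero c)
  exact ⟨_, hgP c hc⟩

variable {V : Type*} [AddCommGroup V] [Module K V]

lemma exists_comp_comp_eq_id {V' : Type*} [AddCommGroup V'] [Module K V'] (f : V →ₗ[K] V') :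
    ∃ (p : V' →ₗ[K] range f) (s : range f →ₗ[K] V), p ∘ₗ f ∘ₗ s = LinearMap.id := by
  obtain ⟨p, hp⟩ := (range f).subtype.exists_leftInverse_of_injective (range f).ker_subtype
  obtain ⟨s, hs⟩ := f.rangeRestrict.exists_rightInverse_of_surjective f.range_rangeRestrict
  refine ⟨p, s, ?_⟩
  calc p ∘ₗ f ∘ₗ s = (p ∘ₗ (range f).subtype) ∘ₗ f.rangeRestrict ∘ₗ s := rfl
    _ = LinearMap.id := by rw [hp, hs, LinearMap.id_comp]

variable [FiniteDimensional K V]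

lemma genericallyOn_ker_eq_bot (f : A →ₗ[K] End K V) {l₀ : A} (hl₀ : l₀ ∈ W)
    (hker : ker (f l₀) = ⊥) : GenericallyOn W fun l => ker (f l) = ⊥ := by
  let b := finBasis K W
  let g := (polyCharpoly (f ∘ₗ W.subtype) b).coeff 0
  have hg (w : W) : MvPolynomial.eval (b.repr w) g ≠ 0 ↔ ker (f w) = ⊥ := by
    rw [← not_ne_iff (a := ker (f w)), ← det_eq_zero_iff_ker_ne_bot, det_eq_sign_charpoly_coeff]
    simp [g]
  refine ⟨g, fun hzero => (hg ⟨l₀, hl₀⟩).mpr hker (by simp [hzero]), fun c hc => ?_⟩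
  have hrepr : ⇑(b.repr (∑ i, c i • b i)) = c := b.repr_sum_self c
  simpa using (hg (∑ i, c i • b i)).mp (by rwa [hrepr])

lemma genericallyOn_finrank_range_ge {V' : Type*} [AddCommGroup V'] [Module K V']
    (f : A →ₗ[K] V →ₗ[K] V') {l₀ : A} (hl₀ : l₀ ∈ W) :
    GenericallyOn W fun l => finrank K (range (f l₀)) ≤ finrank K (range (f l)) := by
  obtain ⟨p, s, hps⟩ := exists_comp_comp_eq_id (f l₀)
  let compress : A →ₗ[K] End K (range (f l₀)) := (lcomp K _ s ∘ₗ llcomp K _ _ _ p) ∘ₗ f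
  have hcompress (l : A) : compress l = p ∘ₗ f l ∘ₗ s := rfl
  have hker : ker (compress l₀) = ⊥ := by rw [hcompress, hps, ker_id]
  refine (genericallyOn_ker_eq_bot compress hl₀ hker).mono fun l _ hl => ?_
  have hinj : Function.Injective (f l ∘ₗ s) :=
    ker_eq_bot.mp (eq_bot_iff.mpr (hl ▸ ker_le_ker_comp (f l ∘ₗ s) p))
  calc finrank K (range (f l₀)) = finrank K (range (f l ∘ₗ s)) := (finrank_range_of_inj hinj).symm
    _ ≤ finrank K (range (f l)) := Submodule.finrank_mono (range_comp_le_range s (f l))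

lemma genericallyOn_finrank_ker_le {V' : Type*} [AddCommGroup V'] [Module K V']
    (f : A →ₗ[K] V →ₗ[K] V') {l₀ : A} (hl₀ : l₀ ∈ W) :
    GenericallyOn W fun l => finrank K (ker (f l)) ≤ finrank K (ker (f l₀)) :=
  (genericallyOn_finrank_range_ge f hl₀).mono fun l _ hl => by
    have h := finrank_range_add_finrank_ker (f l)
    have h₀ := finrank_range_add_finrank_ker (f l₀)
    lia

end Generic

section GradedAlgebra

variable {R A : Type*} [CommSemiring R] [Semiring A] [Algebra R A] (𝒜 : ℕ → Submodule R A)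
  [SetLike.GradedMonoid 𝒜] {l : A}

lemma map_mulLeft_le (hl : l ∈ 𝒜 1) (i : ℕ) : (𝒜 i).map (mulLeft R l) ≤ 𝒜 (i + 1) := by
  rintro _ ⟨x, hx, rfl⟩
  exact add_comm 1 i ▸ SetLike.mul_mem_graded hl hx

lemma isNilpotent_mulLeft (hl : l ∈ 𝒜 1) {d : ℕ} (htop : ∀ i, d < i → 𝒜 i = ⊥) :
    IsNilpotent (mulLeft R l) := by
  have hpow : l ^ (d + 1) ∈ 𝒜 (d + 1) := by simpa using SetLike.pow_mem_graded (d + 1) hl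
  rw [htop _ d.lt_succ_self, Submodule.mem_bot] at hpow
  exact ⟨d + 1, by rw [pow_mulLeft, hpow, mulLeft_zero_eq_zero]⟩

end GradedAlgebra

end Paper

open Paper in
theorem hasWLP_iff_jordanType_card_eq_sperner_general
    {K A : Type*} [Field K] [Infinite K] [CommRing A] [Algebra K A]
    [FiniteDimensional K A] (𝒜 : ℕ → Submodule K A) [GradedAlgebra 𝒜] (d : ℕ)
    (hstd : ∀ i : ℕ, 𝒜 (i + 1) = 𝒜 1 * 𝒜 i)
    (htop : ∀ i : ℕ, d < i → 𝒜 i = ⊥) :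
    (∃ l ∈ 𝒜 1, HasMaximalRank 𝒜 (mulLeft K l)) ↔
      GenericallyOn (𝒜 1) fun l =>
        Multiset.card (jordanType (mulLeft K l)) =
          (Finset.range (d + 1)).sup fun i => finrank K (𝒜 i) := by
  have h𝒜 := DirectSum.Decomposition.isInternal 𝒜
  obtain ⟨k, hsup, hmax⟩ := exists_finrank_eq_sup htop
  rw [hsup]
  constructor
  · rintro ⟨l₀, hl₀, hmr⟩
    have hker₀ := hmr.finrank_ker_mulLeft_eq h𝒜 hstd htop (map_mulLeft_le 𝒜 hl₀) hmax
    refine (genericallyOn_finrank_ker_le (LinearMap.mul K A) hl₀).mono fun l hl hker => ?_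
    rw [card_jordanType (isNilpotent_mulLeft 𝒜 hl htop)]
    refine le_antisymm (hker.trans_eq hker₀) ?_
    exact finrank_ker_eq_add_sum h𝒜 htop (map_mulLeft_le 𝒜 hl) k ▸ Nat.le_add_right _ _
  · intro hgen
    obtain ⟨l, hl, hcard⟩ := hgen.exists_mem
    rw [card_jordanType (isNilpotent_mulLeft 𝒜 hl htop)] at hcard
    exact ⟨l, hl, hasMaximalRank_of_finrank_ker_eq h𝒜 htop (map_mulLeft_le 𝒜 hl) hcard⟩

open Paper Module LinearMap in
/-- a standard graded Artinian `K`-algebra `A` has the Weak Lefschetz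
Property iff the number of parts of its (generic) Jordan type equals the Sperner
number of `A` (the maximal entry of the Hilbert vector). -/
theorem hasWLP_iff_jordanType_card_eq_sperner
    {K A : Type*} [Field K] [CharZero K] [CommRing A] [Algebra K A]
    [FiniteDimensional K A] (𝒜 : ℕ → Submodule K A) [GradedAlgebra 𝒜] (d : ℕ)
    (hstd : ∀ i : ℕ, 𝒜 (i + 1) = 𝒜 1 * 𝒜 i)
    (h0 : 𝒜 0 = Submodule.span K {(1 : A)})
    (htop : ∀ i : ℕ, d < i → 𝒜 i = ⊥)
    (hd : 𝒜 d ≠ ⊥) :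
    (∃ l ∈ 𝒜 1, ∀ i : ℕ,
        finrank K ↥((𝒜 i).map (LinearMap.mulLeft K l)) =
          min (finrank K ↥(𝒜 i)) (finrank K ↥(𝒜 (i + 1)))) ↔
      GenericallyOn (𝒜 1) fun l =>
        Multiset.card (jordanType (LinearMap.mulLeft K l)) =
          (Finset.range (d + 1)).sup fun i => finrank K ↥(𝒜 i) :=
  hasWLP_iff_jordanType_card_eq_sperner_general 𝒜 d hstd htop
end

section
/- Perazzo polynomials have vanishing Hessian: if n > m and f = x_1g_1 + … + x_ng_n ∈ K[x_1,…,x_n,u_1,…,u_m] is a Perazzo polynomial of bidegree (1,d−1), i.e. the g_i ∈ K[u_1,…,u_m]_{d−1} are linearly independent over K, then hess_f = 0, i.e. the determinant of the (n+m)×(n+m) Hessian matrix of second partial derivatives of f is the zero polynomial. -/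
open MvPolynomial

namespace Paper

variable {K : Type*} [Field K]

/-- The Hessian matrix of second partial derivatives of a polynomial. -/
noncomputable def hessian {σ : Type*} (f : MvPolynomial σ K) :
    Matrix σ σ (MvPolynomial σ K) :=
  Matrix.of fun i j => pderiv i (pderiv j f)

/-- The determinant of the Hessian matrix (`hess_f`). -/
noncomputable def hessianDet {σ : Type*} [Fintype σ] [DecidableEq σ]
    (f : MvPolynomial σ K) : MvPolynomial σ K :=
  (hessian f).det

/-- The rank of the Hessian matrix over the rational function field `K(x)`. -/
noncomputable def hessianRank {σ : Type*} [Fintype σ] (f : MvPolynomial σ K) : ℕ :=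
  ((hessian f).map (algebraMap (MvPolynomial σ K) (FractionRing (MvPolynomial σ K)))).rank

end Paper

/-! The partial derivative of `f = ∑ i, xᵢ gᵢ(u)` along `xᵢ` is `gᵢ(u)`, in which no `xⱼ` occurs, so
the `n × n` block of the Hessian indexed by the `x`-variables vanishes. A square matrix of size
`n + m` with an `n × n` zero block is singular as soon as `n + n > n + m`: no permutation can avoid
the block, so every term of the Leibniz expansion is zero. -/

theorem det_eq_zero_of_zero_block {ι R : Type*} [Fintype ι] [DecidableEq ι] [CommRing R]
    {A : Matrix ι ι R} {s t : Finset ι} (hcard : Fintype.card ι < s.card + t.card)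
    (hA : ∀ i ∈ s, ∀ j ∈ t, A i j = 0) : A.det = 0 := by
  rw [Matrix.det_apply]
  refine Finset.sum_eq_zero fun τ _ => ?_
  obtain ⟨j, hjt, hτj⟩ : ∃ j ∈ t, τ j ∈ s := by
    have hmeet : (t.map τ.toEmbedding ∩ s).Nonempty := by
      refine Finset.inter_nonempty_of_card_lt_card_add_card
        (Finset.subset_univ _) (Finset.subset_univ _) ?_
      rwa [Finset.card_map, Finset.card_univ, add_comm]
    obtain ⟨i, hi⟩ := hmeet
    obtain ⟨hit, his⟩ := Finset.mem_inter.mp hi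
    obtain ⟨j, hjt, rfl⟩ := Finset.mem_map.mp hit
    exact ⟨j, hjt, his⟩
  have hprod : ∏ i, A (τ i) i = 0 := Finset.prod_eq_zero (Finset.mem_univ j) (hA _ hτj _ hjt)
  rw [hprod, smul_zero]

theorem pderiv_rename_of_notMem_range {R σ τ : Type*} [CommSemiring R] {φ : σ → τ} {i : τ}
    (hi : i ∉ Set.range φ) (p : MvPolynomial σ R) : pderiv i (rename φ p) = 0 := by
  classical
  refine pderiv_eq_zero_of_notMem_vars fun hvars => hi ?_
  obtain ⟨j, -, hj⟩ := Finset.mem_image.mp (vars_rename φ p hvars)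
  exact ⟨j, hj⟩

theorem pderiv_inl_rename_inr {R ι σ : Type*} [CommSemiring R] (i : ι) (p : MvPolynomial σ R) :
    pderiv (Sum.inl i : ι ⊕ σ) (rename Sum.inr p) = 0 :=
  pderiv_rename_of_notMem_range (by simp) p

/-- The polynomial `∑ i, xᵢ gᵢ(u)` attached to a family `g` of polynomials in the variables `u`.
The variables `xᵢ` are indexed by the left summand of `ι ⊕ σ`, the variables `u` by the right one.
Perazzo polynomials are those for which the `gᵢ` are linearly independent forms of one degree and
outnumber the variables `u`. -/
noncomputable def perazzoSum {R ι σ : Type*} [CommSemiring R] [Fintype ι]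
    (g : ι → MvPolynomial σ R) : MvPolynomial (ι ⊕ σ) R :=
  ∑ i, X (Sum.inl i) * rename Sum.inr (g i)

theorem pderiv_inl_perazzoSum {R ι σ : Type*} [CommSemiring R] [Fintype ι]
    (g : ι → MvPolynomial σ R) (i : ι) :
    pderiv (Sum.inl i) (perazzoSum g) = rename Sum.inr (g i) := by
  classical
  simp [perazzoSum, pderiv_inl_rename_inr, pderiv_X, Pi.single_apply]

theorem hessian_perazzoSum_inl_inl {K ι σ : Type*} [Field K] [Fintype ι]
    (g : ι → MvPolynomial σ K) (i j : ι) :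
    Paper.hessian (perazzoSum g) (Sum.inl i) (Sum.inl j) = 0 := by
  rw [Paper.hessian, Matrix.of_apply, pderiv_inl_perazzoSum, pderiv_inl_rename_inr]

theorem perazzo_hessian_vanishes_general {K ι σ : Type*} [Field K] [Fintype ι] [DecidableEq ι]
    [Fintype σ] [DecidableEq σ] (hcard : Fintype.card σ < Fintype.card ι)
    (g : ι → MvPolynomial σ K) : Paper.hessianDet (perazzoSum g) = 0 := by
  let xVars : Finset (ι ⊕ σ) := Finset.univ.map Function.Embedding.inl
  have hlarge : Fintype.card (ι ⊕ σ) < xVars.card + xVars.card := by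
    rw [Fintype.card_sum, Finset.card_map, Finset.card_univ]
    exact Nat.add_lt_add_left hcard _
  refine det_eq_zero_of_zero_block hlarge fun a ha b hb => ?_
  obtain ⟨i, -, rfl⟩ := Finset.mem_map.mp ha
  obtain ⟨j, -, rfl⟩ := Finset.mem_map.mp hb
  exact hessian_perazzoSum_inl_inl g i j

open Paper MvPolynomial in
/-- Perazzo polynomials have vanishing Hessian. -/
theorem perazzo_hessian_vanishes {K : Type*} [Field K] [CharZero K]
    {n m d : ℕ} (hnm : m < n)
    (g : Fin n → MvPolynomial (Fin m) K)
    (hg : ∀ i, (g i).IsHomogeneous (d - 1))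
    (hli : LinearIndependent K g) :
    hessianDet
      (∑ i, X (Sum.inl i) * rename Sum.inr (g i) : MvPolynomial (Fin n ⊕ Fin m) K) = 0 :=
  perazzo_hessian_vanishes_general (by simpa only [Fintype.card_fin] using hnm) g
end

section
/- Let f = Σ_{i=1}^n x_i g_i and f' = Σ_{i=1}^r x'_i g'_i be bihomogeneous polynomials of the same bidegree (1,d−1) in disjoint sets of variables. Then rk Hess_{f ⊔ f'} = rk Hess_f + rk Hess_{f'}. If moreover g_n = u_m^{d−1} and g'_1 = (u'_1)^{d−1}, so that the concatenation f # f' is defined, then rk Hess_{f # f'} = rk Hess_f + rk Hess_{f'} − 2. -/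
open MvPolynomial

/-!
The Hessian of a juxtaposition is block diagonal. If `∂f/∂x = u ^ e`, then the row and the column
of `x` in the Hessian of `f` vanish except at `u`, where they hold `e * u ^ (e - 1)`. The `(x, u)`
block is therefore an invertible pivot when `e ≠ 0`, and the zeros in the row and column of `x` make
its Schur complement equal to the block of the remaining variables: the rank of the Hessian of `f`
is `2` plus the rank of that block. The same holds for `f'` and for the concatenation, whose
remaining block is block diagonal with the remaining blocks of `f` and `f'` on the diagonal.
-/

namespace Paper

section Rank

open Matrix

variable {F l m n o : Type*} [Field F] [Fintype n] [Fintype o]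

theorem rank_map_algebraMap_le {R E : Type*} [CommRing R] [Field E] [Algebra R E] [Algebra R F]
    [FaithfulSMul R E] [FaithfulSMul R F] [Finite m] (A : Matrix m n R) :
    (A.map (algebraMap R E)).rank ≤ (A.map (algebraMap R F)).rank := by
  obtain ⟨κ, a, ha, hspan, hE⟩ := exists_linearIndependent' E (A.map (algebraMap R E)).col
  have : Fintype κ := Fintype.ofInjective a ha
  have hF : LinearIndependent F ((A.map (algebraMap R F)).col ∘ a) :=
    linearIndependent_algebraMap_comp_iff.2 <|
      (linearIndependent_algebraMap_comp_iff (S := E) (v := A.col ∘ a)).1 hE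
  rw [rank_eq_finrank_span_cols, rank_eq_finrank_span_cols, ← hspan,
    finrank_span_eq_card hE, ← finrank_span_eq_card hF]
  exact Submodule.finrank_mono (Submodule.span_mono (Set.range_comp_subset_range _ _))

theorem rank_map_eq_rank_map {R E : Type*} [CommRing R] [Field E] [Finite m]
    {φ : R →+* E} {ψ : R →+* F} (hφ : Function.Injective φ) (hψ : Function.Injective ψ)
    (A : Matrix m n R) : (A.map φ).rank = (A.map ψ).rank := by
  algebraize [φ, ψ]
  have := (faithfulSMul_iff_algebraMap_injective R E).2 hφ
  have := (faithfulSMul_iff_algebraMap_injective R F).2 hψ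
  exact (rank_map_algebraMap_le A).antisymm (rank_map_algebraMap_le A)

theorem rank_fromBlocks_zero_zero (A : Matrix m n F) (D : Matrix l o F) :
    (fromBlocks A 0 0 D).rank = A.rank + D.rank := by
  let eₙ := LinearEquiv.sumArrowLequivProdArrow n o F F
  let eₘ := LinearEquiv.sumArrowLequivProdArrow m l F F
  have hconj : (fromBlocks A 0 0 D).mulVecLin =
      eₘ.symm ∘ₗ A.mulVecLin.prodMap D.mulVecLin ∘ₗ eₙ := by
    refine LinearMap.ext fun x => funext ?_
    rintro (i | i) <;>
      simp [eₘ, eₙ, fromBlocks_mulVec, LinearEquiv.sumArrowLequivProdArrow,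
        Equiv.sumArrowEquivProdArrow]
  have hrange : Module.finrank F (A.mulVecLin.prodMap D.mulVecLin).range =
      Module.finrank F (A.mulVecLin.range × D.mulVecLin.range) := by
    rw [LinearMap.range_prodMap, ← LinearMap.finrank_range_of_inj
      (f := A.mulVecLin.range.subtype.prodMap D.mulVecLin.range.subtype)
      (Prod.map_injective.2 ⟨Subtype.val_injective, Subtype.val_injective⟩)]
    rw [LinearMap.range_prodMap, Submodule.range_subtype, Submodule.range_subtype]
  rw [rank, hconj, LinearMap.range_comp, LinearEquiv.finrank_map_eq,
    LinearMap.range_comp_of_range_eq_top _ eₙ.range, hrange, Module.finrank_prod]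
  rfl

theorem rank_fromBlocks_of_isUnit₁₁ [Finite l] [Fintype m] [DecidableEq m] {A : Matrix m m F}
    (hA : IsUnit A) (B : Matrix m n F) (C : Matrix l m F) (D : Matrix l n F) :
    (fromBlocks A B C D).rank = Fintype.card m + (D - C * A⁻¹ * B).rank := by
  classical
  cases nonempty_fintype l
  have := hA.invertible
  rw [fromBlocks_eq_of_invertible₁₁, rank_mul_eq_left_of_isUnit_det _ _ (by simp),
    rank_mul_eq_right_of_isUnit_det _ _ (by simp), rank_fromBlocks_zero_zero,
    rank_of_isUnit A hA, invOf_eq_nonsing_inv]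

theorem rank_fromBlocks_antitriangular [Finite l] [Fintype m] [DecidableEq m]
    {a a' : Matrix m m F} (ha : IsUnit a) (ha' : IsUnit a') (b : Matrix m m F)
    (v : Matrix m n F) (w : Matrix l m F) (D : Matrix l n F) :
    (fromBlocks (fromBlocks 0 a a' b) (fromRows 0 v) (fromCols 0 w) D).rank =
      2 * Fintype.card m + D.rank := by
  have hmul : fromBlocks 0 a a' b * fromBlocks (-(a'⁻¹ * b * a⁻¹)) a'⁻¹ a⁻¹ 0 = 1 := by
    simp [fromBlocks_multiply, ← mul_assoc,
      mul_nonsing_inv _ ((isUnit_iff_isUnit_det a).1 ha),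
      mul_nonsing_inv _ ((isUnit_iff_isUnit_det a').1 ha')]
  rw [rank_fromBlocks_of_isUnit₁₁ (.of_mul_eq_one _ hmul), inv_eq_right_inv hmul]
  simp [fromCols_mul_fromBlocks, fromCols_mul_fromRows, two_mul]

end Rank

section FractionRank

open Matrix

variable {R l m n o : Type*} [CommRing R] [Fintype n] [Fintype o]

/-- The rank of a matrix with entries in an integral domain, computed over its fraction field. -/
noncomputable def fractionRank (A : Matrix m n R) : ℕ :=
  (A.map (algebraMap R (FractionRing R))).rank

theorem fractionRank_submatrix (A : Matrix m n R) (eₘ : l ≃ m) (eₙ : o ≃ n) :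
    fractionRank (A.submatrix eₘ eₙ) = fractionRank A :=
  rank_submatrix (A.map (algebraMap R (FractionRing R))) eₘ eₙ

variable [IsDomain R]

theorem fractionRank_map {S Φ : Type*} [CommRing S] [IsDomain S] [FunLike Φ R S]
    [RingHomClass Φ R S] [Finite m] {φ : Φ} (hφ : Function.Injective φ) (A : Matrix m n R) :
    fractionRank (A.map φ) = fractionRank A := by
  rw [fractionRank, Matrix.map_map]
  exact rank_map_eq_rank_map (φ := (algebraMap S (FractionRing S)).comp (φ : R →+* S))
    ((IsFractionRing.injective S _).comp hφ) (IsFractionRing.injective R _) A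

theorem fractionRank_map_rename {σ τ : Type*} [Finite m] {φ : σ → τ}
    (hφ : Function.Injective φ) (A : Matrix m n (MvPolynomial σ R)) :
    fractionRank (A.map (rename φ)) = fractionRank A :=
  fractionRank_map (φ := (rename φ : MvPolynomial σ R →ₐ[R] MvPolynomial τ R))
    (rename_injective φ hφ) A

theorem fractionRank_fromBlocks_zero_zero (A : Matrix m n R) (D : Matrix l o R) :
    fractionRank (fromBlocks A 0 0 D) = fractionRank A + fractionRank D := by
  simp [fractionRank, fromBlocks_map, rank_fromBlocks_zero_zero]

theorem fractionRank_fromBlocks_antitriangular [Finite l] [Fintype m] [DecidableEq m]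
    {a a' : Matrix m m R} (ha : a.det ≠ 0) (ha' : a'.det ≠ 0) (b : Matrix m m R)
    (v : Matrix m n R) (w : Matrix l m R) (D : Matrix l n R) :
    fractionRank (fromBlocks (fromBlocks 0 a a' b) (fromRows 0 v) (fromCols 0 w) D) =
      2 * Fintype.card m + fractionRank D := by
  have isUnit_map {A : Matrix m m R} (hA : A.det ≠ 0) :
      IsUnit (A.map (algebraMap R (FractionRing R))) := by
    rw [isUnit_iff_isUnit_det, ← RingHom.mapMatrix_apply, ← RingHom.map_det, isUnit_iff_ne_zero]
    exact (map_ne_zero_iff _ (IsFractionRing.injective R _)).2 hA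
  rw [fractionRank, fractionRank, ← rank_fromBlocks_antitriangular (isUnit_map ha) (isUnit_map ha')
    (b.map (algebraMap R _)) (v.map (algebraMap R _)) (w.map (algebraMap R _))]
  congr 1
  ext ((i | i) | i) ((j | j) | j) <;> simp

end FractionRank

section Derivative

theorem pderiv_pderiv_comm {K σ : Type*} [CommRing K] (i j : σ) (f : MvPolynomial σ K) :
    pderiv i (pderiv j f) = pderiv j (pderiv i f) := by
  classical
  let D (k : σ) : Derivation K (MvPolynomial σ K) (MvPolynomial σ K) := pderiv k
  have hcomm : ⁅D i, D j⁆ = 0 := by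
    refine derivation_ext fun k => ?_
    rw [Derivation.commutator_apply, pderiv_X, pderiv_X]
    simp only [Pi.single_apply]
    split_ifs <;> simp
  rw [← sub_eq_zero, ← Derivation.commutator_apply (D1 := D i) (D2 := D j), hcomm,
    Derivation.zero_apply]

variable {K ρ σ τ : Type*} [CommSemiring K]

theorem pderiv_rename_of_notMem_range {φ : σ → τ} {i : τ} (hi : i ∉ Set.range φ)
    (f : MvPolynomial σ K) : pderiv i (rename φ f) = 0 := by
  classical
  refine pderiv_eq_zero_of_notMem_vars fun hmem => hi ?_
  obtain ⟨k, -, hk⟩ := Finset.mem_image.1 (vars_rename φ f hmem)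
  exact ⟨k, hk⟩

theorem pderiv_inl_rename_sumMap_id {φ : σ → τ} (hφ : Function.Injective φ) {i : ρ}
    {f : MvPolynomial (ρ ⊕ σ) K} {p : MvPolynomial ρ K}
    (hf : pderiv (Sum.inl i) f = rename Sum.inl p) :
    pderiv (Sum.inl i) (rename (Sum.map id φ) f) = rename Sum.inl p :=
  (pderiv_rename (Function.injective_id.sumMap hφ) (Sum.inl i) f).trans <| by
    rw [hf, rename_rename]
    rfl

theorem pderiv_inl_sum_X_mul_rename {ι κ : Type*} [Fintype ι] (g : ι → MvPolynomial κ K)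
    (i : ι) :
    pderiv (Sum.inl i) (∑ j, X (Sum.inl j) * rename Sum.inr (g j) : MvPolynomial (ι ⊕ κ) K) =
      rename Sum.inr (g i) := by
  classical
  simp [pderiv_rename_of_notMem_range, pderiv_X, Pi.single_apply]

theorem isHomogeneous_sum_X_mul_rename {ι κ : Type*} [Fintype ι] {g : ι → MvPolynomial κ K}
    {e : ℕ} (hg : ∀ i, (g i).IsHomogeneous e) :
    (∑ i, X (Sum.inl i) * rename Sum.inr (g i) : MvPolynomial (ι ⊕ κ) K).IsHomogeneous (1 + e) :=
  .sum _ _ _ fun i _ => (isHomogeneous_X K _).mul (hg i).rename_isHomogeneous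

end Derivative

section Hessian

open Matrix

variable {K k ρ σ τ : Type*} [Field K]

theorem hessian_isSymm (f : MvPolynomial σ K) : (hessian f).IsSymm :=
  .ext fun _ _ => pderiv_pderiv_comm _ _ _

theorem hessianRank_rename_equiv [Fintype σ] [Fintype τ] (e : σ ≃ τ) (f : MvPolynomial σ K) :
    hessianRank (rename e f) = hessianRank f := by
  have hsub : (hessian (rename e f)).submatrix e e = (hessian f).map (rename e) := by
    ext1 i j
    simp [hessian, pderiv_rename e.injective]
  calc hessianRank (rename e f)
      = fractionRank ((hessian (rename e f)).submatrix e e) := (fractionRank_submatrix _ e e).symm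
    _ = fractionRank (hessian f) := by rw [hsub, fractionRank_map_rename e.injective]

theorem hessianRank_eq_zero_of_isHomogeneous_one [Fintype σ] {f : MvPolynomial σ K}
    (hf : f.IsHomogeneous 1) : hessianRank f = 0 := by
  have hzero : hessian f = 0 := by
    ext1 i j
    obtain ⟨c, hc⟩ : ∃ c, pderiv j f = C c :=
      ⟨_, totalDegree_eq_zero_iff_eq_C.1 ((totalDegree_zero_iff_isHomogeneous σ).2 hf.pderiv)⟩
    simp [hessian, hc]
  simp [hessianRank, hzero]

theorem hessianRank_rename_inl_add_rename_inr [Fintype σ] [Fintype τ] (f : MvPolynomial σ K)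
    (f' : MvPolynomial τ K) :
    hessianRank (rename Sum.inl f + rename Sum.inr f') = hessianRank f + hessianRank f' := by
  have hblocks : hessian (rename Sum.inl f + rename Sum.inr f') =
      fromBlocks ((hessian f).map (rename Sum.inl)) 0 0 ((hessian f').map (rename Sum.inr)) := by
    ext1 (i | i) (j | j) <;>
      simp [hessian, pderiv_rename Sum.inl_injective, pderiv_rename Sum.inr_injective,
        pderiv_rename_of_notMem_range]
  change fractionRank _ = _
  rw [hblocks, fractionRank_fromBlocks_zero_zero,
    fractionRank_map_rename Sum.inl_injective, fractionRank_map_rename Sum.inr_injective]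
  rfl

/-- The concatenation of `f` and `f'` along `c`: the variables in `ρ` are shared, and `c` is the
part common to `f` and `f'`, which `f + f'` counts twice. The paper has `ρ = {x, u}` and
`c = x * u ^ (d - 1)`. -/
noncomputable def concatenation (c : MvPolynomial ρ K) (f : MvPolynomial (ρ ⊕ σ) K)
    (f' : MvPolynomial (ρ ⊕ τ) K) : MvPolynomial (ρ ⊕ (σ ⊕ τ)) K :=
  rename (Sum.map id Sum.inl) f + rename (Sum.map id Sum.inr) f' - rename Sum.inl c

theorem pderiv_inl_concatenation {c : MvPolynomial ρ K} {f : MvPolynomial (ρ ⊕ σ) K}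
    {f' : MvPolynomial (ρ ⊕ τ) K} {i : ρ}
    (hf : pderiv (Sum.inl i) f = rename Sum.inl (pderiv i c))
    (hf' : pderiv (Sum.inl i) f' = rename Sum.inl (pderiv i c)) :
    pderiv (Sum.inl i) (concatenation c f f') = rename Sum.inl (pderiv i c) := by
  rw [concatenation, map_sub, map_add, pderiv_inl_rename_sumMap_id Sum.inl_injective hf,
    pderiv_inl_rename_sumMap_id Sum.inr_injective hf', pderiv_rename Sum.inl_injective,
    add_sub_cancel_right]

theorem toBlocks₂₂_hessian_concatenation (c : MvPolynomial ρ K) (f : MvPolynomial (ρ ⊕ σ) K)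
    (f' : MvPolynomial (ρ ⊕ τ) K) :
    (hessian (concatenation c f f')).toBlocks₂₂ =
      fromBlocks ((hessian f).toBlocks₂₂.map (rename (Sum.map id Sum.inl))) 0 0
        ((hessian f').toBlocks₂₂.map (rename (Sum.map id Sum.inr))) := by
  have hl (i : σ) (p : MvPolynomial (ρ ⊕ σ) K) :=
    pderiv_rename (Function.injective_id.sumMap (Sum.inl_injective (β := τ))) (Sum.inr i) p
  have hr (i : τ) (p : MvPolynomial (ρ ⊕ τ) K) :=
    pderiv_rename (Function.injective_id.sumMap (Sum.inr_injective (α := σ))) (Sum.inr i) p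
  simp only [Sum.map_inr] at hl hr
  ext1 (i | i) (j | j) <;>
    simp [hessian, concatenation, toBlocks₂₂, hl, hr, pderiv_rename_of_notMem_range]

theorem hessianRank_eq_two_mul_card_add_fractionRank_toBlocks₂₂ [Fintype k] [DecidableEq k]
    [Fintype σ] {c : MvPolynomial (k ⊕ k) K} (hc₁₁ : (hessian c).toBlocks₁₁ = 0)
    (hc₁₂ : (hessian c).toBlocks₁₂.det ≠ 0) {f : MvPolynomial ((k ⊕ k) ⊕ σ) K}
    (hf : ∀ i, pderiv (Sum.inl (Sum.inl i)) f = rename Sum.inl (pderiv (Sum.inl i) c)) :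
    hessianRank f = 2 * Fintype.card k + fractionRank (hessian f).toBlocks₂₂ := by
  let a : Matrix k k (MvPolynomial ((k ⊕ k) ⊕ σ) K) := (hessian c).toBlocks₁₂.map (rename Sum.inl)
  have ha : a.det ≠ 0 := by
    simp only [a]
    rw [← AlgHom.mapMatrix_apply, ← AlgHom.map_det]
    exact (map_ne_zero_iff _ (rename_injective _ Sum.inl_injective)).2 hc₁₂
  have hcol_inl (p : k ⊕ k) (i : k) :
      hessian f (.inl p) (.inl (.inl i)) = rename Sum.inl (hessian c p (.inl i)) := by
    simp [hessian, hf, pderiv_rename Sum.inl_injective]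
  have hcol_inr (p : σ) (i : k) : hessian f (.inr p) (.inl (.inl i)) = 0 := by
    simp [hessian, hf, pderiv_rename_of_notMem_range]
  have hblocks : hessian f = fromBlocks (fromBlocks 0 a aᵀ (hessian f).toBlocks₁₁.toBlocks₂₂)
      (fromRows 0 (hessian f).toBlocks₁₂.toRows₂) (fromCols 0 (hessian f).toBlocks₂₁.toCols₂)
      (hessian f).toBlocks₂₂ := by
    ext1 ((i | i) | i) ((j | j) | j)
    · rw [hcol_inl]
      exact (congr_arg (rename Sum.inl) (congr_fun₂ hc₁₁ i j)).trans (map_zero _)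
    · rw [← (hessian_isSymm f).apply, hcol_inl, (hessian_isSymm c).apply]
      rfl
    · rw [← (hessian_isSymm f).apply, hcol_inr]
      rfl
    · rw [hcol_inl, (hessian_isSymm c).apply]
      rfl
    · rfl
    · rfl
    · exact hcol_inr i j
    · rfl
    · rfl
  rw [← fractionRank_fromBlocks_antitriangular ha (by rwa [det_transpose]), ← hblocks]
  rfl

theorem hessianRank_concatenation [Fintype k] [DecidableEq k] [Fintype σ] [Fintype τ]
    {c : MvPolynomial (k ⊕ k) K} (hc₁₁ : (hessian c).toBlocks₁₁ = 0)
    (hc₁₂ : (hessian c).toBlocks₁₂.det ≠ 0)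
    {f : MvPolynomial ((k ⊕ k) ⊕ σ) K} {f' : MvPolynomial ((k ⊕ k) ⊕ τ) K}
    (hf : ∀ i, pderiv (Sum.inl (Sum.inl i)) f = rename Sum.inl (pderiv (Sum.inl i) c))
    (hf' : ∀ i, pderiv (Sum.inl (Sum.inl i)) f' = rename Sum.inl (pderiv (Sum.inl i) c)) :
    hessianRank (concatenation c f f') + 2 * Fintype.card k =
      hessianRank f + hessianRank f' := by
  have hblock : fractionRank (hessian (concatenation c f f')).toBlocks₂₂ =
      fractionRank (hessian f).toBlocks₂₂ + fractionRank (hessian f').toBlocks₂₂ := by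
    rw [toBlocks₂₂_hessian_concatenation, fractionRank_fromBlocks_zero_zero,
      fractionRank_map_rename (Function.injective_id.sumMap Sum.inl_injective),
      fractionRank_map_rename (Function.injective_id.sumMap Sum.inr_injective)]
  rw [hessianRank_eq_two_mul_card_add_fractionRank_toBlocks₂₂ hc₁₁ hc₁₂
      fun i => pderiv_inl_concatenation (hf i) (hf' i),
    hessianRank_eq_two_mul_card_add_fractionRank_toBlocks₂₂ hc₁₁ hc₁₂ hf,
    hessianRank_eq_two_mul_card_add_fractionRank_toBlocks₂₂ hc₁₁ hc₁₂ hf', hblock]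
  ring

theorem rename_concatenation {υ υ₁ υ₂ : Type*} (c : MvPolynomial ρ K) (f : MvPolynomial υ₁ K)
    (f' : MvPolynomial υ₂ K) (α : ρ ⊕ σ ≃ υ₁) (β : ρ ⊕ τ ≃ υ₂) {γ : ρ ⊕ (σ ⊕ τ) → υ}
    {φ : υ₁ → υ} {ψ : υ₂ → υ} (hφ : φ ∘ α = γ ∘ Sum.map id Sum.inl)
    (hψ : ψ ∘ β = γ ∘ Sum.map id Sum.inr) :
    rename γ (concatenation c (rename α.symm f) (rename β.symm f')) =
      rename φ f + rename ψ f' - rename (γ ∘ Sum.inl) c := by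
  have hφ' : (γ ∘ Sum.map id Sum.inl) ∘ α.symm = φ := by rw [← hφ, α.comp_symm_eq]
  have hψ' : (γ ∘ Sum.map id Sum.inr) ∘ β.symm = ψ := by rw [← hψ, β.comp_symm_eq]
  simp only [concatenation, map_sub, map_add, rename_rename, ← Function.comp_assoc, hφ', hψ']

end Hessian

section SharedPair

open Matrix

variable {K ι ι' κ κ' I I' J J' : Type*} [Field K]

theorem toBlocks₁₁_hessian_X_mul_X_pow (e : ℕ) :
    (hessian (X (Sum.inl ()) * X (Sum.inr ()) ^ e : MvPolynomial (Unit ⊕ Unit) K)).toBlocks₁₁ =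
      0 := by
  ext1 i j
  simp [toBlocks₁₁, hessian, pderiv_X]

theorem det_toBlocks₁₂_hessian_X_mul_X_pow_ne_zero {e : ℕ} (he : (e : K) ≠ 0) :
    (hessian (X (Sum.inl ()) * X (Sum.inr ()) ^ e :
      MvPolynomial (Unit ⊕ Unit) K)).toBlocks₁₂.det ≠ 0 := by
  have he' : (e : MvPolynomial (Unit ⊕ Unit) K) ≠ 0 := by
    rw [← map_natCast C]
    exact C_ne_zero.2 he
  rw [det_unique]
  simpa [toBlocks₁₂, hessian, pderiv_X, pderiv_pow, X_ne_zero] using he'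

/-- Moves the distinguished elements `eι (inl ())` and `eκ (inl ())` of the two summands of
`I ⊕ J`, standing for the shared variables `x` and `u`, to the front. -/
def pairSumEquiv (eι : Unit ⊕ ι ≃ I) (eκ : Unit ⊕ κ ≃ J) : (Unit ⊕ Unit) ⊕ (ι ⊕ κ) ≃ I ⊕ J :=
  (Equiv.sumSumSumComm Unit Unit ι κ).trans (Equiv.sumCongr eι eκ)

theorem pderiv_rename_pairSumEquiv_symm {eι : Unit ⊕ ι ≃ I} {eκ : Unit ⊕ κ ≃ J} {e : ℕ}
    {f : MvPolynomial (I ⊕ J) K}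
    (hf : pderiv (Sum.inl (eι (Sum.inl ()))) f = X (Sum.inr (eκ (Sum.inl ()))) ^ e) (i : Unit) :
    pderiv (Sum.inl (Sum.inl i)) (rename (pairSumEquiv eι eκ).symm f) =
      rename Sum.inl (pderiv (Sum.inl i) (X (Sum.inl ()) * X (Sum.inr ()) ^ e)) := by
  have hx := pderiv_rename (pairSumEquiv eι eκ).symm.injective (Sum.inl (eι (Sum.inl ()))) f
  rw [hf] at hx
  simpa [pairSumEquiv, pderiv_X, pderiv_pow] using hx

theorem hessianRank_concatenation_add_two [Fintype ι'] [Fintype κ'] [Fintype I] [Fintype I']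
    [Fintype J] [Fintype J']
    (eι : Unit ⊕ ι ≃ I) (eκ : Unit ⊕ κ ≃ J) (eι' : Unit ⊕ ι' ≃ I') (eκ' : Unit ⊕ κ' ≃ J')
    {ψι : I' → I ⊕ ι'} {ψκ : J' → J ⊕ κ'} (hψι : ψι ∘ eι' = Sum.map (eι ∘ Sum.inl) id)
    (hψκ : ψκ ∘ eκ' = Sum.map (eκ ∘ Sum.inl) id) {e : ℕ} (he : (e : K) ≠ 0)
    {f : MvPolynomial (I ⊕ J) K} {f' : MvPolynomial (I' ⊕ J') K}
    (hf : pderiv (Sum.inl (eι (Sum.inl ()))) f = X (Sum.inr (eκ (Sum.inl ()))) ^ e)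
    (hf' : pderiv (Sum.inl (eι' (Sum.inl ()))) f' = X (Sum.inr (eκ' (Sum.inl ()))) ^ e) :
    hessianRank (rename (Sum.map Sum.inl Sum.inl) f + rename (Sum.map ψι ψκ) f' -
        X (Sum.inl (Sum.inl (eι (Sum.inl ())))) * X (Sum.inr (Sum.inl (eκ (Sum.inl ())))) ^ e :
        MvPolynomial ((I ⊕ ι') ⊕ (J ⊕ κ')) K) + 2 =
      hessianRank f + hessianRank f' := by
  have : Fintype ι := Fintype.ofInjective _ (eι.injective.comp Sum.inr_injective)
  have : Fintype κ := Fintype.ofInjective _ (eκ.injective.comp Sum.inr_injective)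
  let γ : (Unit ⊕ Unit) ⊕ ((ι ⊕ κ) ⊕ (ι' ⊕ κ')) ≃ (I ⊕ ι') ⊕ (J ⊕ κ') :=
    (Equiv.sumCongr (.refl _) (Equiv.sumSumSumComm ι κ ι' κ')).trans <|
      pairSumEquiv ((Equiv.sumAssoc Unit ι ι').symm.trans (Equiv.sumCongr eι (.refl ι')))
        ((Equiv.sumAssoc Unit κ κ').symm.trans (Equiv.sumCongr eκ (.refl κ')))
  have hφ : Sum.map Sum.inl Sum.inl ∘ pairSumEquiv eι eκ = γ ∘ Sum.map id Sum.inl := by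
    ext1 ((i | i) | (i | i)) <;> rfl
  have hψ : Sum.map ψι ψκ ∘ pairSumEquiv eι' eκ' = γ ∘ Sum.map id Sum.inr := by
    ext1 ((i | i) | (i | i))
    · exact congr_arg Sum.inl (congr_fun hψι (Sum.inl i))
    · exact congr_arg Sum.inr (congr_fun hψκ (Sum.inl i))
    · exact congr_arg Sum.inl (congr_fun hψι (Sum.inr i))
    · exact congr_arg Sum.inr (congr_fun hψκ (Sum.inr i))
  have hrank := hessianRank_concatenation (toBlocks₁₁_hessian_X_mul_X_pow e)
    (det_toBlocks₁₂_hessian_X_mul_X_pow_ne_zero he) (pderiv_rename_pairSumEquiv_symm hf)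
    (pderiv_rename_pairSumEquiv_symm hf')
  rw [← hessianRank_rename_equiv γ, rename_concatenation _ _ _ _ _ hφ hψ,
    hessianRank_rename_equiv, hessianRank_rename_equiv] at hrank
  simpa [γ, pairSumEquiv] using hrank

end SharedPair

theorem hessianRank_juxtaposition {K I I' J J' : Type*} [Field K] [Fintype I] [Fintype I']
    [Fintype J] [Fintype J'] (f : MvPolynomial (I ⊕ J) K) (f' : MvPolynomial (I' ⊕ J') K) :
    hessianRank (rename (Sum.map Sum.inl Sum.inl) f + rename (Sum.map Sum.inr Sum.inr) f' :
        MvPolynomial ((I ⊕ I') ⊕ (J ⊕ J')) K) = hessianRank f + hessianRank f' := by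
  rw [← hessianRank_rename_inl_add_rename_inr,
    ← hessianRank_rename_equiv (Equiv.sumSumSumComm I J I' J'), map_add, rename_rename,
    rename_rename]
  congr 3 <;> congr 1 <;> ext1 (i | i) <;> rfl

/-- The indices of `Fin (n + 1)` with the last one split off, for the variables `x_n` and `u_m`. -/
def unitSumFinEquivLast (n : ℕ) : Unit ⊕ Fin n ≃ Fin (n + 1) :=
  (Equiv.sumComm _ _).trans <| (Equiv.optionEquivSumPUnit _).symm.trans finSuccEquivLast.symm

/-- The indices of `Fin (n + 1)` with `0` split off, for the variables `x'_1` and `u'_1`. -/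
def unitSumFinEquivZero (n : ℕ) : Unit ⊕ Fin n ≃ Fin (n + 1) :=
  (Equiv.sumComm _ _).trans <| (Equiv.optionEquivSumPUnit _).symm.trans (_root_.finSuccEquiv n).symm

theorem fin_cases_comp_unitSumFinEquivZero (n r : ℕ) :
    (Fin.cases (Sum.inl (Fin.last n)) Sum.inr : Fin (r + 1) → Fin (n + 1) ⊕ Fin r) ∘
      unitSumFinEquivZero r = Sum.map (unitSumFinEquivLast n ∘ Sum.inl) id := by
  ext1 (i | i)
  · simp [unitSumFinEquivZero, unitSumFinEquivLast]
  · simp [unitSumFinEquivZero]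

end Paper

open Paper MvPolynomial in
theorem hessianRank_juxtaposition_concatenation_general {K : Type*} [Field K] {n m r s : ℕ} (e : ℕ)
    (f : MvPolynomial (Fin (n + 1) ⊕ Fin (m + 1)) K)
    (f' : MvPolynomial (Fin (r + 1) ⊕ Fin (s + 1)) K) :
    (hessianRank
        (rename (Sum.map Sum.inl Sum.inl) f + rename (Sum.map Sum.inr Sum.inr) f' :
          MvPolynomial ((Fin (n + 1) ⊕ Fin (r + 1)) ⊕ (Fin (m + 1) ⊕ Fin (s + 1))) K) =
      hessianRank f + hessianRank f') ∧
    ((e : K) ≠ 0 →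
      pderiv (Sum.inl (Fin.last n)) f = X (Sum.inr (Fin.last m)) ^ e →
      pderiv (Sum.inl 0) f' = X (Sum.inr 0) ^ e →
      hessianRank
          (rename (Sum.map Sum.inl Sum.inl) f +
            rename (Sum.map (Fin.cases (Sum.inl (Fin.last n)) Sum.inr)
              (Fin.cases (Sum.inl (Fin.last m)) Sum.inr)) f' -
            X (Sum.inl (Sum.inl (Fin.last n))) * X (Sum.inr (Sum.inl (Fin.last m))) ^ e :
            MvPolynomial ((Fin (n + 1) ⊕ Fin r) ⊕ (Fin (m + 1) ⊕ Fin s)) K) + 2 =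
        hessianRank f + hessianRank f') :=
  ⟨hessianRank_juxtaposition f f', fun he hf hf' =>
    hessianRank_concatenation_add_two (unitSumFinEquivLast n) (unitSumFinEquivLast m)
      (unitSumFinEquivZero r) (unitSumFinEquivZero s) (fin_cases_comp_unitSumFinEquivZero n r)
      (fin_cases_comp_unitSumFinEquivZero m s) he hf hf'⟩

open Paper MvPolynomial in
/-- ranks of Hessians of juxtapositions and concatenations of
bihomogeneous polynomials of bidegree `(1, d-1)`. -/
theorem hessianRank_juxtaposition_concatenation {K : Type*} [Field K] [CharZero K]
    {n m r s : ℕ} (d : ℕ)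
    (g : Fin (n + 1) → MvPolynomial (Fin (m + 1)) K)
    (g' : Fin (r + 1) → MvPolynomial (Fin (s + 1)) K)
    (hg : ∀ i, (g i).IsHomogeneous (d - 1))
    (hg' : ∀ i, (g' i).IsHomogeneous (d - 1)) :
    -- juxtaposition `f ⊔ f' = f + f'` in disjoint sets of variables
    (hessianRank
        (rename (Sum.map Sum.inl Sum.inl)
            (∑ i, X (Sum.inl i) * rename Sum.inr (g i)) +
          rename (Sum.map Sum.inr Sum.inr)
            (∑ i, X (Sum.inl i) * rename Sum.inr (g' i)) :
          MvPolynomial ((Fin (n + 1) ⊕ Fin (r + 1)) ⊕ (Fin (m + 1) ⊕ Fin (s + 1))) K) =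
      hessianRank (∑ i, X (Sum.inl i) * rename Sum.inr (g i) :
          MvPolynomial (Fin (n + 1) ⊕ Fin (m + 1)) K) +
        hessianRank (∑ i, X (Sum.inl i) * rename Sum.inr (g' i) :
          MvPolynomial (Fin (r + 1) ⊕ Fin (s + 1)) K)) ∧
    -- concatenation `f # f' = f + f' - x_n u_m^{d-1}`, identifying `x'_1 = x_n`, `u'_1 = u_m`
    (g (Fin.last n) = X (Fin.last m) ^ (d - 1) →
      g' 0 = X 0 ^ (d - 1) →
      hessianRank
          (rename (Sum.map Sum.inl Sum.inl)
              (∑ i, X (Sum.inl i) * rename Sum.inr (g i)) +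
            rename (Sum.map (Fin.cases (Sum.inl (Fin.last n)) Sum.inr)
                (Fin.cases (Sum.inl (Fin.last m)) Sum.inr))
              (∑ i, X (Sum.inl i) * rename Sum.inr (g' i)) -
            X (Sum.inl (Sum.inl (Fin.last n))) *
              X (Sum.inr (Sum.inl (Fin.last m))) ^ (d - 1) :
            MvPolynomial ((Fin (n + 1) ⊕ Fin r) ⊕ (Fin (m + 1) ⊕ Fin s)) K) =
        hessianRank (∑ i, X (Sum.inl i) * rename Sum.inr (g i) :
            MvPolynomial (Fin (n + 1) ⊕ Fin (m + 1)) K) +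
          hessianRank (∑ i, X (Sum.inl i) * rename Sum.inr (g' i) :
            MvPolynomial (Fin (r + 1) ⊕ Fin (s + 1)) K) - 2) := by
  obtain ⟨hjuxt, hconcat⟩ := hessianRank_juxtaposition_concatenation_general (d - 1)
    (∑ i, X (Sum.inl i) * rename Sum.inr (g i)) (∑ i, X (Sum.inl i) * rename Sum.inr (g' i))
  refine ⟨hjuxt, fun hgn hg0 => ?_⟩
  by_cases hd : d - 1 = 0
  · -- All three polynomials are linear, so `0 = 0 + 0 - 2` by truncation.
    have hf := isHomogeneous_sum_X_mul_rename hg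
    have hf' := isHomogeneous_sum_X_mul_rename hg'
    rw [hd] at hf hf' ⊢
    rw [hessianRank_eq_zero_of_isHomogeneous_one hf, hessianRank_eq_zero_of_isHomogeneous_one hf']
    refine hessianRank_eq_zero_of_isHomogeneous_one ?_
    exact (hf.rename_isHomogeneous.add hf'.rename_isHomogeneous).sub
      ((isHomogeneous_X K _).mul (isHomogeneous_X_pow _ _))
  · refine Nat.eq_sub_of_add_eq (hconcat (mod_cast hd) ?_ ?_)
    · rw [pderiv_inl_sum_X_mul_rename, hgn, map_pow, rename_X]
    · rw [pderiv_inl_sum_X_mul_rename, hg0, map_pow, rename_X]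
end

section
/- For every integer k ≥ 1, the polynomial f = xu^{2k} + yu^kv^k + zv^{2k} ∈ K[x,y,z,u,v], homogeneous of degree d = 2k+1, satisfies hess_f = 0 and rk Hess_f = 4; and for every integer k ≥ 2, the polynomial f = xu^{2k−1} + yuv^{2k−2} + zu^kv^{k−1} ∈ K[x,y,z,u,v], homogeneous of degree d = 2k, satisfies hess_f = 0 and rk Hess_f = 4. In both cases the five first partial derivatives of f are linearly independent over K (so V(f) ⊂ P^4 is not a cone). -/
open MvPolynomial

/-!
Write `f = ∑ xᵢ gᵢ(y)` with more variables `x` than variables `y`. The Hessian of `f` is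
`[[0, J], [Jᵀ, D]]`, where `J` is the Jacobian matrix of `g`. Such a matrix has rank at most twice
the number of variables `y`, so its determinant vanishes, and the bound is attained as soon as `J`
has a nonzero maximal minor. A linear relation between the partial derivatives of `f`,
differentiated with respect to the `xᵢ`, gives a vector in the kernel of `J`, so what remains is a
relation between the `gᵢ`. When the `gᵢ` are monomials, `yₖ ∂gᵢ/∂yₖ` is `gᵢ` times the exponent of
`yₖ`, so the minors of `J` are those of the exponent matrix up to monomial factors.
-/

namespace Paper

section Matrix

open Matrix

variable {m n o p : Type*}

theorem rank_fromBlocks_zero₁₁_le {R : Type*} [CommRing R] [Nontrivial R]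
    [Fintype m] [Fintype n] [Fintype p]
    (B : Matrix o m R) (C : Matrix p n R) (D : Matrix p m R) :
    (fromBlocks 0 B C D).rank ≤ Fintype.card m + Fintype.card p := by
  classical
  have factorization : fromBlocks 0 B C D =
      fromBlocks B 0 D (1 : Matrix p p R) * fromBlocks 0 (1 : Matrix m m R) C 0 := by
    simp [fromBlocks_multiply]
  calc (fromBlocks 0 B C D).rank ≤ (fromBlocks B 0 D (1 : Matrix p p R)).rank :=
        factorization ▸ rank_mul_le_left _ _
    _ ≤ Fintype.card (m ⊕ p) := rank_le_card_width _
    _ = Fintype.card m + Fintype.card p := Fintype.card_sum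

theorem card_add_card_le_rank_fromBlocks_zero₁₁ {R : Type*} [CommRing R] [IsDomain R]
    [Fintype m] [DecidableEq m] [Fintype n] [Fintype p] [DecidableEq p]
    {B : Matrix o m R} {C : Matrix p n R} (D : Matrix p m R) {r : m → o} {c : p → n}
    (hB : (B.submatrix r id).det ≠ 0) (hC : (C.submatrix id c).det ≠ 0) :
    Fintype.card m + Fintype.card p ≤ (fromBlocks 0 B C D).rank := by
  have minor : (fromBlocks 0 B C D).submatrix (Sum.elim Sum.inr (Sum.inl ∘ r)) (Sum.map c id) =
      fromBlocks (C.submatrix id c) D 0 (B.submatrix r id) := by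
    ext (i | i) (j | j) <;> rfl
  have minor_det_ne_zero :
      (fromBlocks (C.submatrix id c) D 0 (B.submatrix r id)).det ≠ 0 := by
    rw [det_fromBlocks_zero₂₁]
    exact mul_ne_zero hC hB
  calc Fintype.card m + Fintype.card p = Fintype.card (p ⊕ m) := by
        rw [Fintype.card_sum, add_comm]
    _ = (fromBlocks (C.submatrix id c) D 0 (B.submatrix r id)).rank :=
        (rank_of_det_ne_zero minor_det_ne_zero).symm
    _ ≤ (fromBlocks 0 B C D).rank := minor ▸ rank_submatrix_le _ _ _

theorem det_map_ne_zero {R S : Type*} [CommRing R] [CommRing S] [Fintype n] [DecidableEq n]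
    {φ : R →+* S} (hφ : Function.Injective φ) {A : Matrix n n R} (hA : A.det ≠ 0) :
    (A.map φ).det ≠ 0 := by
  rw [← RingHom.mapMatrix_apply, ← RingHom.map_det]
  exact (map_ne_zero_iff φ hφ).mpr hA

end Matrix

theorem hessianDet_eq_zero_of_hessianRank_lt {K σ : Type*} [Field K] [Fintype σ] [DecidableEq σ]
    {f : MvPolynomial σ K} (hf : hessianRank f < Fintype.card σ) : hessianDet f = 0 := by
  by_contra hdet
  exact hf.ne <| Matrix.rank_of_det_ne_zero <|
    det_map_ne_zero (IsFractionRing.injective _ (FractionRing (MvPolynomial σ K))) hdet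

section Jacobian

variable {R ι κ : Type*} [CommRing R]

/-- The Jacobian matrix of a family of polynomials, with one row for each polynomial and one column
for each variable. -/
noncomputable def jacobian (g : ι → MvPolynomial κ R) : Matrix ι κ (MvPolynomial κ R) :=
  Matrix.of fun i k => pderiv k (g i)

theorem eq_zero_of_forall_sum_smul_pderiv_eq_zero [IsDomain R] [Fintype κ] [DecidableEq κ]
    {g : ι → MvPolynomial κ R} {r : κ → ι} (hr : (jacobian (g ∘ r)).det ≠ 0) {b : κ → R}
    (hb : ∀ i, ∑ k, b k • pderiv k (g i) = 0) : b = 0 := by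
  have jacobian_mulVec : (jacobian (g ∘ r)).mulVec (C ∘ b) = 0 := by
    ext1 i
    simpa [Matrix.mulVec, dotProduct, jacobian, smul_eq_C_mul, mul_comm] using hb (r i)
  funext k
  simpa using congrFun (Matrix.eq_zero_of_mulVec_eq_zero hr jacobian_mulVec) k

/-- The exponents of a family of monomials as a matrix with entries in `R`, with one row for each
monomial and one column for each variable. -/
def exponentMatrix (R : Type*) [CommRing R] (a : ι → κ →₀ ℕ) : Matrix ι κ R :=
  Matrix.of fun i k => (a i k : R)

theorem jacobian_monomial_mul_diagonal_X [Fintype ι] [DecidableEq ι] [Fintype κ] [DecidableEq κ]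
    (a : ι → κ →₀ ℕ) :
    jacobian (fun i => monomial (a i) (1 : R)) * Matrix.diagonal (X : κ → MvPolynomial κ R) =
      Matrix.diagonal (fun i => monomial (a i) (1 : R)) *
        (exponentMatrix R a).map (C (σ := κ)) := by
  ext1 i k
  simp only [Matrix.mul_diagonal, Matrix.diagonal_mul, jacobian, exponentMatrix, Matrix.of_apply,
    Matrix.map_apply]
  rw [mul_comm, X_mul_pderiv_monomial, nsmul_eq_mul, map_natCast, mul_comm]

theorem det_jacobian_monomial_ne_zero [IsDomain R] [Fintype κ] [DecidableEq κ] {a : κ → κ →₀ ℕ}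
    (ha : (exponentMatrix R a).det ≠ 0) :
    (jacobian fun i => monomial (a i) (1 : R)).det ≠ 0 := by
  have monomials_ne_zero : ∏ i, monomial (a i) (1 : R) ≠ 0 :=
    Finset.prod_ne_zero_iff.mpr fun i _ => by simp
  have det_identity := congrArg Matrix.det (jacobian_monomial_mul_diagonal_X (R := R) a)
  rw [Matrix.det_mul, Matrix.det_mul, Matrix.det_diagonal, Matrix.det_diagonal] at det_identity
  refine left_ne_zero_of_mul (det_identity ▸ mul_ne_zero monomials_ne_zero ?_)
  exact det_map_ne_zero (C_injective κ R) ha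

theorem linearIndependent_monomial {a : ι → κ →₀ ℕ} (ha : Function.Injective a) :
    LinearIndependent R fun i => monomial (a i) (1 : R) := by
  simpa only [coe_basisMonomials] using! (basisMonomials κ R).linearIndependent.comp a ha

end Jacobian

section Rename

variable {R ι κ σ : Type*} [CommSemiring R] (e : ι ⊕ κ ≃ σ)

theorem pderiv_inl_rename_inr (i : ι) (p : MvPolynomial κ R) :
    pderiv (e (.inl i)) (rename (e ∘ .inr) p) = 0 := by
  classical
  refine pderiv_eq_zero_of_notMem_vars fun hi => ?_
  obtain ⟨k, -, hk⟩ := Finset.mem_image.mp (vars_rename _ _ hi)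
  exact Sum.inr_ne_inl (e.injective hk)

theorem pderiv_inr_rename_inr (k : κ) (p : MvPolynomial κ R) :
    pderiv (e (.inr k)) (rename (e ∘ .inr) p) = rename (e ∘ .inr) (pderiv k p) :=
  pderiv_rename (e.injective.comp Sum.inr_injective) k p

end Rename

/-- The Perazzo polynomial `∑ xᵢ gᵢ(y)`. The equivalence `e` names the variables: `xᵢ` is
`X (e (inl i))` and `yₖ` is `X (e (inr k))`. -/
noncomputable def perazzo {K ι κ σ : Type*} [Field K] [Fintype ι] (e : ι ⊕ κ ≃ σ)
    (g : ι → MvPolynomial κ K) : MvPolynomial σ K :=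
  ∑ i, X (e (.inl i)) * rename (e ∘ .inr) (g i)

namespace perazzo

variable {K ι κ σ : Type*} [Field K] [Fintype ι] (e : ι ⊕ κ ≃ σ) (g : ι → MvPolynomial κ K)

theorem isHomogeneous {g : ι → MvPolynomial κ K} {d : ℕ} (hg : ∀ i, (g i).IsHomogeneous d) :
    (perazzo e g).IsHomogeneous (d + 1) :=
  IsHomogeneous.sum _ _ _ fun i _ =>
    add_comm d 1 ▸ (isHomogeneous_X K _).mul (hg i).rename_isHomogeneous

theorem pderiv_inl (i : ι) : pderiv (e (.inl i)) (perazzo e g) = rename (e ∘ .inr) (g i) := by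
  classical
  simp [perazzo, pderiv_inl_rename_inr, Pi.single_apply]

theorem pderiv_inr (k : κ) :
    pderiv (e (.inr k)) (perazzo e g) = perazzo e fun i => pderiv k (g i) := by
  simp [perazzo, pderiv_inr_rename_inr]

theorem hessian_submatrix :
    (hessian (perazzo e g)).submatrix e e =
      Matrix.fromBlocks 0 ((jacobian g).map (rename (e ∘ .inr)))
        ((jacobian g).transpose.map (rename (e ∘ .inr)))
        ((hessian (perazzo e g)).submatrix (e ∘ .inr) (e ∘ .inr)) := by
  ext1 (i | k) (j | l) <;>
    simp [hessian, jacobian, pderiv_inl, pderiv_inr, pderiv_inl_rename_inr, pderiv_inr_rename_inr]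

theorem hessianRank_eq_rank_fromBlocks [Fintype κ] [Fintype σ] :
    let φ := algebraMap (MvPolynomial σ K) (FractionRing (MvPolynomial σ K))
    let ψ := φ.comp (rename (e ∘ .inr)).toRingHom
    hessianRank (perazzo e g) =
      (Matrix.fromBlocks 0 ((jacobian g).map ψ) ((jacobian g).transpose.map ψ)
        (((hessian (perazzo e g)).submatrix (e ∘ .inr) (e ∘ .inr)).map φ)).rank := by
  intro φ ψ
  rw [hessianRank, ← Matrix.rank_submatrix _ e e, Matrix.submatrix_map, hessian_submatrix,
    Matrix.fromBlocks_map]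
  simp [ψ, φ, Matrix.map_map, Function.comp_def]

theorem hessianRank_le [Fintype κ] [Fintype σ] :
    hessianRank (perazzo e g) ≤ 2 * Fintype.card κ := by
  rw [hessianRank_eq_rank_fromBlocks, two_mul]
  exact rank_fromBlocks_zero₁₁_le _ _ _

theorem hessianDet_eq_zero [Fintype κ] [Fintype σ] [DecidableEq σ]
    (hcard : Fintype.card κ < Fintype.card ι) : hessianDet (perazzo e g) = 0 := by
  apply hessianDet_eq_zero_of_hessianRank_lt
  calc hessianRank (perazzo e g) ≤ 2 * Fintype.card κ := hessianRank_le e g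
    _ < Fintype.card ι + Fintype.card κ := by lia
    _ = Fintype.card σ := by rw [← Fintype.card_sum, Fintype.card_congr e]

section JacobianMinor

variable {g} [Fintype κ] [DecidableEq κ] {r : κ → ι}

theorem hessianRank_eq [Fintype σ] (hr : (jacobian (g ∘ r)).det ≠ 0) :
    hessianRank (perazzo e g) = 2 * Fintype.card κ := by
  refine (hessianRank_le e g).antisymm ?_
  rw [hessianRank_eq_rank_fromBlocks, two_mul]
  have injective : Function.Injective
      ((algebraMap (MvPolynomial σ K) (FractionRing (MvPolynomial σ K))).comp
        (rename (e ∘ Sum.inr)).toRingHom) :=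
    (IsFractionRing.injective _ _).comp
      (rename_injective _ (e.injective.comp Sum.inr_injective))
  have minor_ne_zero := det_map_ne_zero injective hr
  have minor_transpose_ne_zero := (Matrix.det_transpose _).trans_ne minor_ne_zero
  exact card_add_card_le_rank_fromBlocks_zero₁₁ _ minor_ne_zero minor_transpose_ne_zero

theorem linearIndependent_pderiv (hr : (jacobian (g ∘ r)).det ≠ 0)
    (hg : LinearIndependent K g) : LinearIndependent K fun s => pderiv s (perazzo e g) := by
  have rename_inr_injective : Function.Injective (rename (R := K) (e ∘ Sum.inr)) :=
    rename_injective _ (e.injective.comp Sum.inr_injective)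
  refine (linearIndependent_equiv e).mp (Fintype.linearIndependent_iff.mpr fun c hc => ?_)
  simp only [Function.comp_apply, Fintype.sum_sum_type, pderiv_inl, pderiv_inr] at hc
  have inr_eq_zero : c ∘ Sum.inr = 0 := by
    refine eq_zero_of_forall_sum_smul_pderiv_eq_zero hr fun i => rename_inr_injective ?_
    simpa [pderiv_inl_rename_inr, pderiv_inl] using congrArg (pderiv (e (.inl i))) hc
  have inl_eq_zero : ∀ i, c (.inl i) = 0 := by
    refine Fintype.linearIndependent_iff.mp hg _ (rename_inr_injective ?_)
    have inr_apply (k : κ) : c (.inr k) = 0 := congrFun inr_eq_zero k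
    simpa [inr_apply] using hc
  exact Sum.rec inl_eq_zero (congrFun inr_eq_zero)

end JacobianMinor

theorem vanishing_hessian_of_monomial [Fintype κ] [DecidableEq κ] [Fintype σ] [DecidableEq σ]
    {a : ι → κ →₀ ℕ} {r : κ → ι} {d : ℕ} (hd : ∀ i, (a i).degree = d)
    (ha : Function.Injective a) (hr : (exponentMatrix K (a ∘ r)).det ≠ 0)
    (hcard : Fintype.card κ < Fintype.card ι) :
    let f := perazzo e fun i => monomial (a i) (1 : K)
    f.IsHomogeneous (d + 1) ∧ hessianDet f = 0 ∧ hessianRank f = 2 * Fintype.card κ ∧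
      LinearIndependent K fun s => pderiv s f :=
  have minor_ne_zero := det_jacobian_monomial_ne_zero hr
  ⟨isHomogeneous e fun i => isHomogeneous_monomial _ (hd i),
    hessianDet_eq_zero e _ hcard,
    hessianRank_eq e minor_ne_zero,
    linearIndependent_pderiv e minor_ne_zero (linearIndependent_monomial ha)⟩

end perazzo

theorem vanishing_hessian_of_binary_monomials {K : Type*} [Field K] {a b : Fin 3 → ℕ} {d : ℕ}
    (hd : ∀ i, a i + b i = d) (ha : Function.Injective a)
    (hdet : (a 0 * b 1 : K) ≠ a 1 * b 0) {f : MvPolynomial (Fin 5) K}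
    (hf : f = X 0 * X 3 ^ a 0 * X 4 ^ b 0 + X 1 * X 3 ^ a 1 * X 4 ^ b 1 +
      X 2 * X 3 ^ a 2 * X 4 ^ b 2) :
    f.IsHomogeneous (d + 1) ∧ hessianDet f = 0 ∧ hessianRank f = 4 ∧
      LinearIndependent K fun i => pderiv i f := by
  let varEquiv : Fin 3 ⊕ Fin 2 ≃ Fin 5 := finSumFinEquiv
  let exponents (i : Fin 3) : Fin 2 →₀ ℕ := Finsupp.equivFunOnFinite.symm ![a i, b i]
  have rename_monomial_exponents (i : Fin 3) :
      rename (varEquiv ∘ .inr) (monomial (exponents i) (1 : K)) = X 3 ^ a i * X 4 ^ b i := by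
    rw [monomial_eq, Finsupp.prod_fintype _ _ fun _ => pow_zero _, Fin.prod_univ_two]
    simp only [map_mul, map_pow, map_one, one_mul, rename_X]
    rfl
  have f_eq_perazzo : f = perazzo varEquiv fun i => monomial (exponents i) 1 := by
    simp only [hf, perazzo, Fin.sum_univ_three, rename_monomial_exponents, mul_assoc]
    rfl
  rw [f_eq_perazzo]
  refine perazzo.vanishing_hessian_of_monomial varEquiv (r := ![0, 1])
    (fun i => ?_) (fun i j hij => ?_) ?_ (by simp)
  · simpa [Finsupp.degree_eq_sum, exponents] using hd i
  · exact ha (DFunLike.congr_fun hij 0)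
  · simpa [Matrix.det_fin_two, exponentMatrix, exponents, sub_eq_zero, mul_comm] using hdet

end Paper

open Paper MvPolynomial in
/-- for every degree `d ≥ 3` there are explicit forms in 5 variables
(`x = X 0`, `y = X 1`, `z = X 2`, `u = X 3`, `v = X 4`) with vanishing Hessian,
Hessian rank 4, and linearly independent first partial derivatives (not cones). -/
theorem explicit_vanishing_hessian_examples {K : Type*} [Field K] [CharZero K] :
    (∀ k : ℕ, 1 ≤ k →
      (X 0 * X 3 ^ (2 * k) + X 1 * X 3 ^ k * X 4 ^ k + X 2 * X 4 ^ (2 * k) :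
          MvPolynomial (Fin 5) K).IsHomogeneous (2 * k + 1) ∧
      hessianDet (X 0 * X 3 ^ (2 * k) + X 1 * X 3 ^ k * X 4 ^ k + X 2 * X 4 ^ (2 * k) :
          MvPolynomial (Fin 5) K) = 0 ∧
      hessianRank (X 0 * X 3 ^ (2 * k) + X 1 * X 3 ^ k * X 4 ^ k + X 2 * X 4 ^ (2 * k) :
          MvPolynomial (Fin 5) K) = 4 ∧
      LinearIndependent K (fun i : Fin 5 =>
        pderiv i (X 0 * X 3 ^ (2 * k) + X 1 * X 3 ^ k * X 4 ^ k + X 2 * X 4 ^ (2 * k) :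
          MvPolynomial (Fin 5) K))) ∧
    (∀ k : ℕ, 2 ≤ k →
      (X 0 * X 3 ^ (2 * k - 1) + X 1 * X 3 * X 4 ^ (2 * k - 2) +
            X 2 * X 3 ^ k * X 4 ^ (k - 1) :
          MvPolynomial (Fin 5) K).IsHomogeneous (2 * k) ∧
      hessianDet (X 0 * X 3 ^ (2 * k - 1) + X 1 * X 3 * X 4 ^ (2 * k - 2) +
            X 2 * X 3 ^ k * X 4 ^ (k - 1) :
          MvPolynomial (Fin 5) K) = 0 ∧
      hessianRank (X 0 * X 3 ^ (2 * k - 1) + X 1 * X 3 * X 4 ^ (2 * k - 2) +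
            X 2 * X 3 ^ k * X 4 ^ (k - 1) :
          MvPolynomial (Fin 5) K) = 4 ∧
      LinearIndependent K (fun i : Fin 5 =>
        pderiv i (X 0 * X 3 ^ (2 * k - 1) + X 1 * X 3 * X 4 ^ (2 * k - 2) +
              X 2 * X 3 ^ k * X 4 ^ (k - 1) :
          MvPolynomial (Fin 5) K))) := by
  refine ⟨fun k hk => ?_, fun k hk => ?_⟩
  · have k_ne_zero : (k : K) ≠ 0 := Nat.cast_ne_zero.mpr (by lia)
    refine vanishing_hessian_of_binary_monomials (a := ![2 * k, k, 0]) (b := ![0, k, 2 * k])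
      (fun i => ?_) (fun i j => ?_) (by simp [k_ne_zero]) (by simp)
    · fin_cases i <;> dsimp <;> lia
    · fin_cases i <;> fin_cases j <;> dsimp <;> lia
  · obtain ⟨n, rfl⟩ : ∃ n, k = n + 1 := ⟨k - 1, by lia⟩
    have n_ne_zero : (n : K) ≠ 0 := Nat.cast_ne_zero.mpr (by lia)
    have two_mul_add_one_ne_zero : (2 * n + 1 : K) ≠ 0 := mod_cast (2 * n).succ_ne_zero
    refine vanishing_hessian_of_binary_monomials (d := 2 * n + 1) (a := ![2 * n + 1, 1, n + 1])
      (b := ![0, 2 * n, n]) (fun i => ?_) (fun i j => ?_)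
      (by simp [n_ne_zero, two_mul_add_one_ne_zero]) (by simp [mul_add])
    · fin_cases i <;> dsimp <;> lia
    · fin_cases i <;> fin_cases j <;> dsimp <;> lia
end
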